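/- arXiv:2004.10801 — 2 statements merged into one kernel-verified Lean document; each statement's English description precedes it below -/
import Mathlib

section
/- For all integers 1 < m ≤ k and every integer r with 1 ≤ r < m, the element h_{k,m} of Houghton's group H₂ has positive spherical comparison curvature at radius r: κ_r^𝒮(h_{k,m}) > 0 with respect to the generating set {s, s⁻¹, σ}. -/
namespace MedScale

/-- Word length of `g` with respect to a generating set `S`: the least length of a
word in the elements of `S` representing `g`. -/
noncomputable def wlen {G : Type*} [Group G] (S : Set G) (g : G) : ℕ :=
  sInf {n : ℕ | ∃ l : List G, (∀ x ∈ l, x ∈ S) ∧ l.prod = g ∧ l.length = n}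

/-- Sphere of radius `r` about the identity. -/
def sphere {G : Type*} [Group G] (S : Set G) (r : ℕ) : Set G := {g : G | wlen S g = r}

/-- Ball of radius `r` about the identity. -/
def ball {G : Type*} [Group G] (S : Set G) (r : ℕ) : Set G := {g : G | wlen S g ≤ r}

/-- Spherical comparison distance `𝒮_r(g) = (1/|S_r|) ∑_{w ∈ S_r} |w⁻¹ g w|`. -/
noncomputable def sphereDist {G : Type*} [Group G] (S : Set G) (r : ℕ) (g : G) : ℝ :=
  (1 / (Nat.card (sphere S r) : ℝ)) * ∑ᶠ w ∈ sphere S r, (wlen S (w⁻¹ * g * w) : ℝ)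

/-- Spherical comparison curvature `κ_r^𝒮(g) = (|g| − 𝒮_r(g))/|g|`. -/
noncomputable def sphereCurv {G : Type*} [Group G] (S : Set G) (r : ℕ) (g : G) : ℝ :=
  ((wlen S g : ℝ) - sphereDist S r g) / (wlen S g : ℝ)

/-- Ball comparison distance `ℬ_r(g) = (1/|B_r|) ∑_{w ∈ B_r} |w⁻¹ g w|`. -/
noncomputable def ballDist {G : Type*} [Group G] (S : Set G) (r : ℕ) (g : G) : ℝ :=
  (1 / (Nat.card (ball S r) : ℝ)) * ∑ᶠ w ∈ ball S r, (wlen S (w⁻¹ * g * w) : ℝ)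

/-- Ball comparison curvature `κ_r^ℬ(g) = (|g| − ℬ_r(g))/|g|`. -/
noncomputable def ballCurv {G : Type*} [Group G] (S : Set G) (r : ℕ) (g : G) : ℝ :=
  ((wlen S g : ℝ) - ballDist S r g) / (wlen S g : ℝ)

/-- `GenCon(g) = (1/|S|) ∑_{s ∈ S} |s⁻¹ g s|`. -/
noncomputable def genCon {G : Type*} [Group G] (S : Set G) (g : G) : ℝ :=
  (1 / (Nat.card S : ℝ)) * ∑ᶠ s ∈ S, (wlen S (s⁻¹ * g * s) : ℝ)

/-- Comparison curvature `κ(g) = (|g| − GenCon(g))/|g|`. -/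
noncomputable def curv {G : Type*} [Group G] (S : Set G) (g : G) : ℝ :=
  ((wlen S g : ℝ) - genCon S g) / (wlen S g : ℝ)

end MedScale

namespace Houghton

/-- The generator `s` of Houghton's group `H₂`: shift every bead one position to the
right along the bi-infinite string `ℤ ∖ {0}` (extended to fix `0`), i.e.
`s n = n + 1` for `n ≥ 1`, `s (-1) = 1`, and `s n = n + 1` for `n ≤ -2`. -/
def s : Equiv.Perm ℤ where
  toFun n := if n = 0 then 0 else if n = -1 then 1 else n + 1
  invFun n := if n = 0 then 0 else if n = 1 then -1 else n - 1
  left_inv := by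
    intro n
    beta_reduce
    split_ifs <;> first | omega | exact (‹False›).elim
  right_inv := by
    intro n
    beta_reduce
    split_ifs <;> first | omega | exact (‹False›).elim

/-- The generator `σ` of Houghton's group `H₂`: the transposition exchanging `-1` and `1`. -/
def σ : Equiv.Perm ℤ := Equiv.swap (-1) 1

/-- The standard symmetric generating set `{s, s⁻¹, σ}` of Houghton's group `H₂`. -/
def S : Set (Equiv.Perm ℤ) := {s, s⁻¹, σ}

/-- Houghton's group `H₂`, as the group generated by `s` and `σ` (equivalently, the
permutations of `ℤ ∖ {0}` that agree with a translation outside a finite set). -/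
def H₂ : Subgroup (Equiv.Perm ℤ) := Subgroup.closure {s, σ}

/-- The element `h_{k,m}` exchanging `l` and `-l` for every `m ≤ l ≤ k`
and fixing all other points. -/
def h (k m : ℕ) : Equiv.Perm ℤ where
  toFun n := if m ≤ n.natAbs ∧ n.natAbs ≤ k then -n else n
  invFun n := if m ≤ n.natAbs ∧ n.natAbs ≤ k then -n else n
  left_inv := by
    intro n; dsimp only
    by_cases hc : m ≤ n.natAbs ∧ n.natAbs ≤ k
    · rw [if_pos hc, if_pos (by simpa [Int.natAbs_neg] using hc), neg_neg]
    · rw [if_neg hc, if_neg hc]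
  right_inv := by
    intro n; dsimp only
    by_cases hc : m ≤ n.natAbs ∧ n.natAbs ≤ k
    · rw [if_pos hc, if_pos (by simpa [Int.natAbs_neg] using hc), neg_neg]
    · rw [if_neg hc, if_neg hc]

end Houghton

/-!
Closing the gap at `0` turns the beads into `ℤ`, the generators into `n ↦ n + 1` and the
transposition of `-1` and `0`, and `h_{k,m}` into the reflection `n ↦ -1 - n` on the layers
`{i, -1 - i}`, `m - 1 ≤ i < k`. A word is read as a walk of a cursor which swaps the two beads
next to it.

An element `w` of length `r < m` is a permutation of the layers below `m - 1` followed by a power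
`s ^ t` with `|t| ≤ r`, so it conjugates `h_{k,m}` to `s⁻ᵗ h_{k,m} sᵗ`. A spiralling walk shows that
this conjugate has length at most `∑ (8 i + 1) + 2 (k - 1 - |t|)`, the sum being over the layers.
For `t = 0` this is optimal. Every inversion of `h_{k,m}` costs a swap. A cursor move drags one
bead along; moves that drag a bead which started on the left to the right, or vice versa, outnumber
the other, wasted, moves by `∑ 4 i`. Finally, on each level `1 ≤ q < k` some move between `q - 1`
and `q`, or between `1 - q` and `-q`, is wasted: otherwise a bead that started between `-q` and `q`
is dragged out and never returns.
-/

namespace MedScale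

variable {G H : Type*} [Group G] [Group H] {T : Set G} {g g' : G} {n n' r : ℕ}

/-- `g` is the value of a word of length exactly `n` in the elements of `T`, so that `wlen T g` is
the least `n` with `HasWord T g n`. -/
def HasWord (T : Set G) (g : G) (n : ℕ) : Prop :=
  ∃ l : List G, (∀ x ∈ l, x ∈ T) ∧ l.prod = g ∧ l.length = n

namespace HasWord

lemma one : HasWord T 1 0 :=
  ⟨[], by simp, rfl, rfl⟩

lemma of_mem (hg : g ∈ T) : HasWord T g 1 :=
  ⟨[g], by simpa using hg, by simp, rfl⟩

lemma mul (hg : HasWord T g n) (hg' : HasWord T g' n') : HasWord T (g * g') (n + n') := by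
  obtain ⟨l, hl, rfl, rfl⟩ := hg
  obtain ⟨l', hl', rfl, rfl⟩ := hg'
  refine ⟨l ++ l', fun x hx => ?_, List.prod_append, List.length_append⟩
  exact (List.mem_append.1 hx).elim (hl x) (hl' x)

lemma pow_of_mem (hg : g ∈ T) (n : ℕ) : HasWord T (g ^ n) n :=
  ⟨List.replicate n g, fun _ hx => List.eq_of_mem_replicate hx ▸ hg, by simp, by simp⟩

lemma zpow_of_mem (hg : g ∈ T) (hg' : g⁻¹ ∈ T) (t : ℤ) : HasWord T (g ^ t) t.natAbs := by
  obtain ⟨n, rfl | rfl⟩ := t.eq_nat_or_neg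
  · simpa using pow_of_mem hg n
  · simpa using pow_of_mem hg' n

protected lemma induction {P : G → ℕ → Prop} (one : P 1 0)
    (mul : ∀ x ∈ T, ∀ g n, HasWord T g n → P g n → P (x * g) (n + 1)) (hg : HasWord T g n) :
    P g n := by
  obtain ⟨l, hl, rfl, rfl⟩ := hg
  induction l with
  | nil => exact one
  | cons x l ih =>
    obtain ⟨hx, hl⟩ := List.forall_mem_cons.1 hl
    simpa using mul x hx l.prod l.length ⟨l, hl, rfl, rfl⟩ (ih hl)

lemma map {T' : Set H} (f : G →* H) (hf : ∀ x ∈ T, f x ∈ T') (hg : HasWord T g n) :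
    HasWord T' (f g) n := by
  obtain ⟨l, hl, rfl, rfl⟩ := hg
  exact ⟨l.map f, List.forall_mem_map.2 fun x hx => hf x (hl x hx), (map_list_prod f l).symm,
    List.length_map f⟩

lemma exists_of_image {f : G →* H} {y : H} (hy : HasWord (f '' T) y n) :
    ∃ g, f g = y ∧ HasWord T g n := by
  refine HasWord.induction (P := fun y n => ∃ g, f g = y ∧ HasWord T g n) ?_ ?_ hy
  · exact ⟨1, map_one f, one⟩
  · rintro _ ⟨x, hx, rfl⟩ _ n - ⟨g, rfl, hg⟩
    exact ⟨x * g, map_mul f x g, add_comm 1 n ▸ (of_mem hx).mul hg⟩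

lemma wlen_le (hg : HasWord T g n) : wlen T g ≤ n :=
  Nat.sInf_le hg

end HasWord

lemma hasWord_image_iff {f : G →* H} (hf : Function.Injective f) :
    HasWord (f '' T) (f g) n ↔ HasWord T g n := by
  refine ⟨fun h => ?_, fun h => h.map f fun _ => Set.mem_image_of_mem f⟩
  obtain ⟨g', hgg', hg'⟩ := h.exists_of_image
  exact hf hgg' ▸ hg'

lemma HasWord.hasWord_wlen (hg : HasWord T g n) : HasWord T g (wlen T g) :=
  Nat.sInf_mem (s := {n | HasWord T g n}) ⟨n, hg⟩

lemma wlen_image {f : G →* H} (hf : Function.Injective f) (g : G) :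
    wlen (f '' T) (f g) = wlen T g :=
  congrArg sInf (Set.ext fun _ => hasWord_image_iff hf)

/-- The radius `0` is excluded since `wlen` is `0` on elements that are not generated by `T`. -/
lemma hasWord_of_mem_sphere (hr : r ≠ 0) (hg : g ∈ sphere T r) : HasWord T g r := by
  have hlen : wlen T g = r := hg
  obtain ⟨n, hn⟩ := Nat.nonempty_of_pos_sInf (Nat.pos_of_ne_zero (hlen ▸ hr))
  exact hlen ▸ HasWord.hasWord_wlen hn

lemma sphere_image {f : G →* H} (hf : Function.Injective f) (hr : r ≠ 0) :
    sphere (f '' T) r = f '' sphere T r := by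
  ext y
  constructor
  · intro hy
    obtain ⟨g, rfl, -⟩ := (hasWord_of_mem_sphere hr hy).exists_of_image
    exact ⟨g, (wlen_image hf g).symm.trans hy, rfl⟩
  · rintro ⟨g, hg, rfl⟩
    exact (wlen_image hf g).trans hg

lemma sphereCurv_image {f : G →* H} (hf : Function.Injective f) (hr : r ≠ 0) (g : G) :
    sphereCurv (f '' T) r (f g) = sphereCurv T r g := by
  simp only [sphereCurv, sphereDist, sphere_image hf hr, Nat.card_image_of_injective hf,
    finsum_mem_image hf.injOn, ← map_inv, ← map_mul, wlen_image hf]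

lemma finite_setOf_hasWord (hT : T.Finite) (n : ℕ) : {g | HasWord T g n}.Finite := by
  have : Finite T := hT
  refine ((List.finite_length_eq T n).image fun l => (l.map Subtype.val).prod).subset ?_
  rintro _ ⟨l, hl, rfl, rfl⟩
  lift l to List T using hl
  exact ⟨l, by simp⟩

lemma sphere_finite (hT : T.Finite) (hr : r ≠ 0) : (sphere T r).Finite :=
  (finite_setOf_hasWord hT r).subset fun _ => hasWord_of_mem_sphere hr

lemma sphereCurv_pos (hT : T.Finite) (hr : r ≠ 0)
    (hle : ∀ w ∈ sphere T r, wlen T (w⁻¹ * g * w) ≤ wlen T g)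
    (hlt : ∃ w ∈ sphere T r, wlen T (w⁻¹ * g * w) < wlen T g) :
    0 < sphereCurv T r g := by
  obtain ⟨w, hw, hwlt⟩ := hlt
  set F := (sphere_finite hT hr).toFinset
  have mem_F {w : G} : w ∈ F ↔ w ∈ sphere T r := (sphere_finite hT hr).mem_toFinset
  have hcard : (0 : ℝ) < F.card := by exact_mod_cast Finset.card_pos.2 ⟨w, mem_F.2 hw⟩
  have hsum : ∑ w ∈ F, (wlen T (w⁻¹ * g * w) : ℝ) < F.card * wlen T g := by
    rw [← nsmul_eq_mul, ← Finset.sum_const]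
    exact Finset.sum_lt_sum (fun w hw => by exact_mod_cast hle w (mem_F.1 hw))
      ⟨w, mem_F.2 hw, by exact_mod_cast hwlt⟩
  have hdist : sphereDist T r g < wlen T g := by
    rwa [sphereDist, finsum_mem_eq_finite_toFinset_sum _ (sphere_finite hT hr),
      Nat.card_eq_card_finite_toFinset (sphere_finite hT hr), one_div, inv_mul_lt_iff₀ hcard]
  exact div_pos (sub_pos.2 hdist) (by exact_mod_cast Nat.zero_lt_of_lt hwlt)

end MedScale

namespace Houghton

open MedScale Equiv Filter

/-! ### Closing the gap at zero -/

/-- The numbering of the beads by `ℤ` which keeps the negative ones and moves the positive ones one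
step to the left. -/
def beadEquiv : ℤ ≃ {n : ℤ // n ≠ 0} where
  toFun n := ⟨if n < 0 then n else n + 1, by split_ifs <;> omega⟩
  invFun n := if (n : ℤ) < 0 then n else n - 1
  left_inv n := by dsimp only; split_ifs <;> omega
  right_inv := by
    rintro ⟨n, hn⟩
    ext
    dsimp only
    split_ifs <;> omega

lemma beadEquiv_apply (n : ℤ) : (beadEquiv n : ℤ) = if n < 0 then n else n + 1 := rfl

/-- The action on the beads `ℤ ∖ {0}` of a permutation of `ℤ`. -/
def extend : Perm ℤ →* Perm ℤ :=
  Perm.extendDomainHom beadEquiv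

lemma extend_injective : Function.Injective extend :=
  Perm.extendDomainHom_injective beadEquiv

lemma eq_extend {g v : Perm ℤ} (h₀ : g 0 = 0) (h : ∀ n, g (beadEquiv n) = beadEquiv (v n)) :
    g = extend v := by
  ext n
  by_cases hn : n = 0
  · subst hn
    exact h₀.trans (Perm.extendDomain_apply_not_subtype v beadEquiv (by simp)).symm
  · obtain ⟨b, hb⟩ := beadEquiv.surjective ⟨n, hn⟩
    obtain rfl : (beadEquiv b : ℤ) = n := congrArg Subtype.val hb
    exact (h b).trans (Perm.extendDomain_apply_image v beadEquiv b).symm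

/-- The generator `s` of `H₂` on the renumbered beads. -/
def shift : Perm ℤ := Equiv.addRight 1

/-- The generator `σ` of `H₂` on the renumbered beads. -/
def adjSwap : Perm ℤ := swap (-1) 0

/-- The generating set `{s, s⁻¹, σ}` of `H₂` on the renumbered beads. -/
def gens : Set (Perm ℤ) := {shift, shift⁻¹, adjSwap}

/-- The element `h_{b,a+1}` of `H₂` on the renumbered beads: it reflects the layers `{i, -1 - i}`
for `a ≤ i < b`. The layer of `n` is `max n (-1 - n)`. -/
def mirror (a b : ℕ) : Perm ℤ :=
  Function.Involutive.toPerm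
    (fun n => if a ≤ max n (-1 - n) ∧ max n (-1 - n) < b then -1 - n else n)
    (fun n => by dsimp only; split_ifs <;> omega)

lemma shift_apply (n : ℤ) : shift n = n + 1 := rfl

lemma shift_inv_apply (n : ℤ) : shift⁻¹ n = n - 1 := rfl

lemma adjSwap_apply (n : ℤ) : adjSwap n = if n = -1 then 0 else if n = 0 then -1 else n :=
  swap_apply_def (-1) 0 n

lemma mirror_apply (a b : ℕ) (n : ℤ) :
    mirror a b n = if a ≤ max n (-1 - n) ∧ max n (-1 - n) < b then -1 - n else n := rfl

lemma shift_zpow_apply (t n : ℤ) : (shift ^ t) n = n + t := by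
  simp [shift]

lemma shift_mem_gens : shift ∈ gens := by simp [gens]

lemma shift_inv_mem_gens : shift⁻¹ ∈ gens := by simp [gens]

lemma adjSwap_mem_gens : adjSwap ∈ gens := by simp [gens]

lemma forall_mem_gens {P : Perm ℤ → Prop} :
    (∀ x ∈ gens, P x) ↔ P shift ∧ P shift⁻¹ ∧ P adjSwap := by
  simp [gens]

lemma gens_finite : gens.Finite :=
  Set.toFinite {shift, shift⁻¹, adjSwap}

lemma s_apply (n : ℤ) : s n = if n = 0 then 0 else if n = -1 then 1 else n + 1 := rfl

lemma h_apply (k m : ℕ) (n : ℤ) :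
    h k m n = if m ≤ n.natAbs ∧ n.natAbs ≤ k then -n else n := rfl

lemma s_eq_extend : s = extend shift := by
  refine eq_extend rfl fun n => ?_
  rw [s_apply, beadEquiv_apply, beadEquiv_apply, shift_apply]
  split_ifs <;> omega

lemma σ_eq_extend : σ = extend adjSwap := by
  refine eq_extend (swap_apply_of_ne_of_ne (by simp) (by simp)) fun n => ?_
  rw [σ, swap_apply_def, beadEquiv_apply, beadEquiv_apply, adjSwap_apply]
  split_ifs <;> omega

lemma S_eq_image : S = extend '' gens := by
  simp only [S, gens, Set.image_insert_eq, Set.image_singleton, map_inv, s_eq_extend, σ_eq_extend]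

lemma h_eq_extend (a k : ℕ) : h k (a + 1) = extend (mirror a k) := by
  refine eq_extend (by simp [h_apply]) fun n => ?_
  rw [h_apply, beadEquiv_apply, beadEquiv_apply, mirror_apply]
  split_ifs <;> omega

/-! ### The reflection of the line -/

/-- Conjugation by the reflection `n ↦ -1 - n`, the symmetry of the Cayley graph of `H₂` which
exchanges left and right. -/
def flip : MulAut (Perm ℤ) :=
  MulAut.conj (Equiv.subLeft (-1))

lemma flip_apply (v : Perm ℤ) (n : ℤ) : flip v n = -1 - v (-1 - n) := by
  change -1 - v (-n + -1) = _
  ring_nf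

lemma flip_flip (v : Perm ℤ) : flip (flip v) = v := by
  ext n
  simp [flip_apply]

lemma flip_shift : flip shift = shift⁻¹ := by
  ext n
  rw [flip_apply, shift_apply, shift_inv_apply]
  ring

lemma flip_shift_inv : flip shift⁻¹ = shift := by
  rw [← flip_shift, flip_flip]

lemma flip_adjSwap : flip adjSwap = adjSwap := by
  ext n
  simp only [flip_apply, adjSwap_apply]
  split_ifs <;> omega

lemma flip_mirror (a b : ℕ) : flip (mirror a b) = mirror a b := by
  ext n
  simp only [flip_apply, mirror_apply]
  split_ifs <;> omega

lemma flip_mem_gens : ∀ x ∈ gens, flip x ∈ gens := by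
  rw [forall_mem_gens, flip_shift, flip_shift_inv, flip_adjSwap]
  exact ⟨shift_inv_mem_gens, shift_mem_gens, adjSwap_mem_gens⟩

/-! ### Conjugation by short elements -/

lemma natAbs_apply_sub_le {v : Perm ℤ} {n : ℕ} (hv : HasWord gens v n) (x : ℤ) :
    (v x - x).natAbs ≤ n := by
  refine HasWord.induction (P := fun v n => (v x - x).natAbs ≤ n) (by simp) ?_ hv
  rw [forall_mem_gens]
  refine ⟨?_, ?_, ?_⟩ <;> intro v n _ ih
  · rw [Perm.mul_apply, shift_apply]; omega
  · rw [Perm.mul_apply, shift_inv_apply]; omega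
  · rw [Perm.mul_apply, adjSwap_apply]; split_ifs <;> omega

lemma wlen_shift_pow (r : ℕ) : wlen gens (shift ^ r) = r := by
  have hr : HasWord gens (shift ^ r) r := HasWord.pow_of_mem shift_mem_gens r
  have hdisp := natAbs_apply_sub_le hr.hasWord_wlen 0
  rw [← zpow_natCast, shift_zpow_apply] at hdisp
  exact hr.wlen_le.antisymm (by simpa using hdisp)

lemma exists_eq_mul_shift_zpow {v : Perm ℤ} {n : ℕ} (hv : HasWord gens v n) :
    ∃ (f : Perm ℤ) (t : ℤ), v = f * shift ^ t ∧ t.natAbs ≤ n ∧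
      ∀ x ∉ Set.Ico (-n : ℤ) n, f x = x := by
  refine HasWord.induction (P := fun v n => ∃ (f : Perm ℤ) (t : ℤ), v = f * shift ^ t ∧
    t.natAbs ≤ n ∧ ∀ x ∉ Set.Ico (-n : ℤ) n, f x = x) ⟨1, 0, by simp⟩ ?_ hv
  simp only [forall_mem_gens, Set.mem_Ico]
  refine ⟨?_, ?_, ?_⟩ <;> rintro _ n - ⟨f, t, rfl, ht, hf⟩
  · refine ⟨shift * f * shift⁻¹, t + 1, by rw [zpow_add_one]; group, by omega, fun x hx => ?_⟩
    rw [Perm.mul_apply, Perm.mul_apply, shift_inv_apply, hf _ (by omega), shift_apply]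
    ring
  · refine ⟨shift⁻¹ * f * shift, t - 1, by rw [zpow_sub_one]; group, by omega, fun x hx => ?_⟩
    rw [Perm.mul_apply, Perm.mul_apply, shift_apply, hf _ (by omega), shift_inv_apply]
    ring
  · refine ⟨adjSwap * f, t, by group, by omega, fun x hx => ?_⟩
    rw [Perm.mul_apply, hf _ (by omega), adjSwap_apply, if_neg (by omega), if_neg (by omega)]

lemma exists_conj_mirror_eq {w : Perm ℤ} {n a : ℕ} (b : ℕ) (hw : HasWord gens w n) (hn : n ≤ a) :
    ∃ t : ℤ, t.natAbs ≤ n ∧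
      w⁻¹ * mirror a b * w = shift ^ (-t) * mirror a b * shift ^ t := by
  obtain ⟨f, t, rfl, ht, hf⟩ := exists_eq_mul_shift_zpow hw
  have hdisj : Perm.Disjoint f (mirror a b) := fun x => by
    by_cases hx : x ∈ Set.Ico (-n : ℤ) n
    · rw [Set.mem_Ico] at hx
      exact Or.inr (if_neg (by omega))
    · exact Or.inl (hf x hx)
  refine ⟨t, ht, ?_⟩
  calc (f * shift ^ t)⁻¹ * mirror a b * (f * shift ^ t)
      = shift ^ (-t) * (f⁻¹ * (mirror a b * f)) * shift ^ t := by group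
    _ = shift ^ (-t) * mirror a b * shift ^ t := by
      rw [← hdisj.commute.eq, inv_mul_cancel_left]

/-! ### Short words for the conjugates -/

lemma hasWord_swap (j : ℕ) : HasWord gens (swap (-1) (j : ℤ)) (4 * j + 1) := by
  induction j with
  | zero => exact HasWord.of_mem adjSwap_mem_gens
  | succ j ih =>
    have hconj : swap (-1) ((j + 1 : ℕ) : ℤ)
        = adjSwap * shift * swap (-1) (j : ℤ) * shift⁻¹ * adjSwap := by
      ext n
      simp only [Perm.mul_apply, adjSwap_apply, shift_apply, shift_inv_apply, swap_apply_def]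
      split_ifs <;> omega
    have hσ := HasWord.of_mem adjSwap_mem_gens
    have hs := HasWord.of_mem shift_mem_gens
    have hs' := HasWord.of_mem shift_inv_mem_gens
    rw [hconj]
    convert (((hσ.mul hs).mul ih).mul hs').mul hσ using 1
    ring

lemma hasWord_shift_zpow (t : ℤ) : HasWord gens (shift ^ t) t.natAbs :=
  HasWord.zpow_of_mem shift_mem_gens shift_inv_mem_gens t

lemma hasWord_conj_swap (i : ℕ) :
    HasWord gens (shift ^ (i : ℤ) * swap (-1 - i : ℤ) i * shift ^ (-i : ℤ)) (8 * i + 1) := by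
  have hconj : shift ^ (i : ℤ) * swap (-1 - i : ℤ) i * shift ^ (-i : ℤ)
      = swap (-1) ((2 * i : ℕ) : ℤ) := by
    rw [Equiv.mul_swap_eq_swap_mul, zpow_neg, mul_inv_cancel_right, shift_zpow_apply,
      shift_zpow_apply]
    congr 1 <;> push_cast <;> ring
  rw [hconj]
  convert hasWord_swap (2 * i) using 1
  ring

lemma mirror_self (a : ℕ) : mirror a a = 1 := by
  ext n
  exact if_neg (by omega)

lemma mirror_succ {a b : ℕ} (hab : a ≤ b) :
    mirror a (b + 1) = swap (-1 - b : ℤ) b * mirror a b := by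
  ext n
  rw [Perm.mul_apply, mirror_apply, mirror_apply, swap_apply_def]
  split_ifs <;> omega

/-- The walk spirals outwards: a single `shift` leads from the loop for one layer to the loop for
the next one. -/
lemma hasWord_spiral {a b : ℕ} (hab : a ≤ b) :
    HasWord gens (shift ^ (b : ℤ) * mirror a (b + 1) * shift ^ (-a : ℤ))
      (∑ i ∈ Finset.Ico a (b + 1), (8 * i + 1) + (b - a)) := by
  induction b, hab using Nat.le_induction with
  | base => simpa [mirror_succ le_rfl, mirror_self] using hasWord_conj_swap a
  | succ b hab ih =>
    have hstep : shift ^ ((b + 1 : ℕ) : ℤ) * mirror a (b + 1 + 1) * shift ^ (-a : ℤ)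
        = (shift ^ ((b + 1 : ℕ) : ℤ) * swap (-1 - ((b + 1 : ℕ) : ℤ)) ((b + 1 : ℕ) : ℤ)
            * shift ^ (-((b + 1 : ℕ) : ℤ))) * shift
          * (shift ^ (b : ℤ) * mirror a (b + 1) * shift ^ (-a : ℤ)) := by
      rw [mirror_succ (b := b + 1) (by omega), Nat.cast_succ]
      group
    rw [hstep, Finset.sum_Ico_succ_top (by omega)]
    convert ((hasWord_conj_swap (b + 1)).mul (HasWord.of_mem shift_mem_gens)).mul ih using 1
    omega

lemma hasWord_shift_pow_conj_mirror {a b t : ℕ} (hab : a ≤ b) (ht : t ≤ a) :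
    HasWord gens (shift ^ (t : ℤ) * mirror a (b + 1) * shift ^ (-t : ℤ))
      (∑ i ∈ Finset.Ico a (b + 1), (8 * i + 1) + 2 * (b - t)) := by
  have hfactor : shift ^ (t : ℤ) * mirror a (b + 1) * shift ^ (-t : ℤ)
      = shift ^ (t - b : ℤ) * (shift ^ (b : ℤ) * mirror a (b + 1) * shift ^ (-a : ℤ))
        * shift ^ (a - t : ℤ) := by group
  rw [hfactor]
  convert ((hasWord_shift_zpow _).mul (hasWord_spiral hab)).mul (hasWord_shift_zpow _) using 1
  omega

lemma hasWord_shift_zpow_conj_mirror {a b : ℕ} {t : ℤ} (hab : a ≤ b) (ht : t.natAbs ≤ a) :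
    HasWord gens (shift ^ (-t) * mirror a (b + 1) * shift ^ t)
      (∑ i ∈ Finset.Ico a (b + 1), (8 * i + 1) + 2 * (b - t.natAbs)) := by
  obtain ⟨n, rfl | rfl⟩ := t.eq_nat_or_neg
  · have hflip := (hasWord_shift_pow_conj_mirror hab (by simpa using ht)).map
      flip.toMonoidHom flip_mem_gens
    simpa [flip_shift, flip_mirror] using hflip
  · simpa using hasWord_shift_pow_conj_mirror hab (by simpa using ht)

/-! ### Lower bound for the length -/

/-- The signed number of beads between a bead at distance `n` from the cursor and the cursor,
negative on the left. It vanishes for the two beads next to the cursor, which `adjSwap`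
exchanges. -/
def offset (n : ℤ) : ℤ := if n < 0 then n + 1 else n

/-- The total offset that the `2 * K` central beads have gained in the direction away from their
own side of the line: this is the number of the useful cursor moves minus the number of the wasted
ones. -/
def drift (K : ℕ) (v : Perm ℤ) : ℤ :=
  ∑ i ∈ Finset.range K, (offset (v (-1 - i)) - offset (v i) + 2 * i)

/-- The number of pairs in `E` which `v` inverts. -/
def inversionCount (E : Finset (ℤ × ℤ)) (v : Perm ℤ) : ℕ :=
  (E.filter fun p => v p.2 < v p.1).card

/-- The state of a walk with cursor at `c` that has not wasted a move on level `q`, that is between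
`q - 1` and `q` or between `1 - q` and `-q`: either nothing outside the central beads `-q, …, q - 1`
has been moved, or one of these has been dragged from its own side of the line past the opposite end
of this interval. The position of the bead `x`, counted in the same way as that of the cursor, is
`offset (v x) + c`. -/
def LevelIntact (v : Perm ℤ) (c q : ℤ) : Prop :=
  (-q < c ∧ c < q ∧ ∀ x ∉ Set.Ico (-q) q, v x + c = x) ∨
  (∃ x ∈ Set.Ico (-q) 0, q ≤ offset (v x) + c) ∨
  (∃ x ∈ Set.Ico 0 q, offset (v x) + c ≤ -q)

/-- The cost of moving the cursor: `n` moves suffice to pay for the drift and twice for each of the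
levels in a finite set `B` outside of which all levels are intact. -/
def MovesPaid (K : ℕ) (v : Perm ℤ) (n : ℤ) : Prop :=
  ∃ (c : ℤ) (B : Finset ℤ), (∀ᶠ x in cofinite, v x + c = x) ∧ drift K v + 2 * B.card ≤ n ∧
    ∀ q, 1 ≤ q → q ∉ B → LevelIntact v c q

lemma offset_neg_one_sub (n : ℤ) : offset (-1 - n) = -offset n := by
  unfold offset
  split_ifs <;> omega

lemma offset_add_one (n : ℤ) : offset (n + 1) = offset n + 1 - if n = -1 then 1 else 0 := by
  unfold offset
  split_ifs <;> omega

lemma offset_adjSwap (n : ℤ) : offset (adjSwap n) = offset n := by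
  rw [adjSwap_apply]
  unfold offset
  split_ifs <;> omega

lemma drift_one (K : ℕ) : drift K 1 = 0 := by
  refine Finset.sum_eq_zero fun i _ => ?_
  rw [Perm.one_apply, Perm.one_apply, offset_neg_one_sub, offset, if_neg (by omega)]
  ring

lemma drift_flip (K : ℕ) (v : Perm ℤ) : drift K (flip v) = drift K v := by
  refine Finset.sum_congr rfl fun i _ => ?_
  rw [flip_apply, flip_apply, offset_neg_one_sub, offset_neg_one_sub, sub_sub_cancel]
  ring

lemma drift_adjSwap_mul (K : ℕ) (v : Perm ℤ) : drift K (adjSwap * v) = drift K v := by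
  simp only [drift, Perm.mul_apply, offset_adjSwap]

lemma drift_shift_mul {K : ℕ} {v : Perm ℤ} {p : ℤ} (hp : v p = -1) (hK : p ∈ Set.Ico (-K : ℤ) K) :
    drift K (shift * v) = drift K v + if 0 ≤ p then 1 else -1 := by
  have hv (x : ℤ) : v x = -1 ↔ x = p := by rw [← hp, v.injective.eq_iff]
  have hdiff : drift K (shift * v) - drift K v
      = ∑ i ∈ Finset.range K, ((if (i : ℤ) = p then 1 else 0) - if -1 - i = p then 1 else 0) := by
    simp only [drift, ← Finset.sum_sub_distrib, Perm.mul_apply, shift_apply, offset_add_one, hv]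
    exact Finset.sum_congr rfl fun i _ => by ring
  rw [← sub_eq_iff_eq_add', hdiff, Finset.sum_sub_distrib]
  rw [Set.mem_Ico] at hK
  rcases lt_or_ge p 0 with hneg | hpos
  · obtain ⟨j, rfl⟩ : ∃ j : ℕ, p = -1 - j := ⟨(-1 - p).toNat, by omega⟩
    have hright (i : ℕ) : (i : ℤ) ≠ -1 - j := by omega
    rw [if_neg (by omega : ¬ (0 : ℤ) ≤ -1 - j)]
    simp [hright, show j < K by omega]
  · lift p to ℕ using hpos
    have hleft (i : ℕ) : (-1 - i : ℤ) ≠ p := by omega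
    simp [hleft, show p < K by omega]

lemma LevelIntact.flip {v : Perm ℤ} {c q : ℤ} (hv : LevelIntact v c q) :
    LevelIntact (flip v) (-c) q := by
  rcases hv with ⟨hc, hc', hout⟩ | ⟨x, hx, hxc⟩ | ⟨x, hx, hxc⟩
  · refine Or.inl ⟨by omega, by omega, fun x hx => ?_⟩
    have := hout (-1 - x) (by rw [Set.mem_Ico] at hx ⊢; omega)
    rw [flip_apply]
    omega
  · refine Or.inr (Or.inr ⟨-1 - x, by rw [Set.mem_Ico] at hx ⊢; omega, ?_⟩)
    rw [flip_apply, sub_sub_cancel, offset_neg_one_sub]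
    omega
  · refine Or.inr (Or.inl ⟨-1 - x, by rw [Set.mem_Ico] at hx ⊢; omega, ?_⟩)
    rw [flip_apply, sub_sub_cancel, offset_neg_one_sub]
    omega

lemma LevelIntact.one {q : ℤ} (hq : 1 ≤ q) : LevelIntact 1 0 q :=
  Or.inl ⟨by omega, by omega, by simp⟩

lemma LevelIntact.adjSwap_mul {v : Perm ℤ} {c q : ℤ} (hv : LevelIntact v c q) :
    LevelIntact (adjSwap * v) c q := by
  simp only [LevelIntact, Perm.mul_apply, offset_adjSwap] at hv ⊢
  refine hv.imp_left fun ⟨hc, hc', hout⟩ => ⟨hc, hc', fun x hx => ?_⟩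
  have hvx := hout x hx
  rw [Set.mem_Ico] at hx
  rwa [adjSwap_apply, if_neg (by omega), if_neg (by omega)]

/-- The bead `p` is dragged to the left, from `c` to `c - 1`. This is wasted if `p` started on the
left, and then it spoils the level `max c (1 - c)`. -/
lemma LevelIntact.shift_mul {v : Perm ℤ} {c p q : ℤ} (hv : LevelIntact v c q) (hp : v p = -1)
    (hq : 0 ≤ p ∨ q ≠ max c (1 - c)) : LevelIntact (shift * v) (c - 1) q := by
  have hoffset (x : ℤ) : offset ((shift * v) x) = offset (v x) + 1 - if x = p then 1 else 0 := by
    simp only [Perm.mul_apply, shift_apply, offset_add_one, ← hp, v.injective.eq_iff]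
  have hoffset_p : offset (v p) = 0 := by rw [hp]; rfl
  rcases hv with ⟨hc, hc', hout⟩ | ⟨x, hx, hxc⟩ | ⟨x, hx, hxc⟩
  · rcases lt_or_ge (-q) (c - 1) with hstay | hleave
    · refine Or.inl ⟨hstay, by omega, fun x hx => ?_⟩
      have := hout x hx
      rw [Perm.mul_apply, shift_apply]
      omega
    · have hpq : p ∈ Set.Ico (-q) q := by
        by_contra hpq
        have := hout p hpq
        rw [Set.mem_Ico] at hpq
        omega
      rw [Set.mem_Ico] at hpq
      refine Or.inr (Or.inr ⟨p, Set.mem_Ico.2 (by omega), ?_⟩)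
      rw [hoffset, if_pos rfl]
      omega
  · refine Or.inr (Or.inl ⟨x, hx, ?_⟩)
    rw [Set.mem_Ico] at hx
    rw [hoffset]
    split_ifs with hxp
    · subst hxp
      omega
    · omega
  · refine Or.inr (Or.inr ⟨x, hx, ?_⟩)
    rw [hoffset]
    split_ifs <;> omega

lemma MovesPaid.one (K : ℕ) : MovesPaid K 1 0 :=
  ⟨0, ∅, by simp, by simp [drift_one], fun _ hq _ => LevelIntact.one hq⟩

lemma MovesPaid.mono {K : ℕ} {v : Perm ℤ} {n n' : ℤ} (hv : MovesPaid K v n) (hn : n ≤ n') :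
    MovesPaid K v n' := by
  obtain ⟨c, B, htrans, hcost, hintact⟩ := hv
  exact ⟨c, B, htrans, hcost.trans hn, hintact⟩

lemma MovesPaid.flip {K : ℕ} {v : Perm ℤ} {n : ℤ} (hv : MovesPaid K v n) :
    MovesPaid K (flip v) n := by
  obtain ⟨c, B, htrans, hcost, hintact⟩ := hv
  refine ⟨-c, B, ?_, by rwa [drift_flip], fun q hq hqB => (hintact q hq hqB).flip⟩
  filter_upwards [(Equiv.subLeft (-1 : ℤ)).injective.tendsto_cofinite.eventually htrans] with x hx
  rw [Equiv.subLeft_apply] at hx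
  rw [flip_apply]
  omega

lemma MovesPaid.adjSwap_mul {K : ℕ} {v : Perm ℤ} {n : ℤ} (hv : MovesPaid K v n) :
    MovesPaid K (adjSwap * v) n := by
  obtain ⟨c, B, htrans, hcost, hintact⟩ := hv
  refine ⟨c, B, ?_, by rwa [drift_adjSwap_mul], fun q hq hqB => (hintact q hq hqB).adjSwap_mul⟩
  filter_upwards [htrans, (Set.finite_Icc (c - 1) c).compl_mem_cofinite] with x hx hxc
  rw [Set.mem_compl_iff, Set.mem_Icc] at hxc
  rw [Perm.mul_apply, adjSwap_apply, if_neg (by omega), if_neg (by omega), hx]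

lemma MovesPaid.shift_mul {K : ℕ} {v : Perm ℤ} {n p : ℤ} (hv : MovesPaid K v n) (hp : v p = -1)
    (hK : p ∈ Set.Ico (-K : ℤ) K) : MovesPaid K (shift * v) (n + 1) := by
  obtain ⟨c, B, htrans, hcost, hintact⟩ := hv
  have htrans' : ∀ᶠ x in cofinite, (shift * v) x + (c - 1) = x :=
    htrans.mono fun x hx => by rw [Perm.mul_apply, shift_apply]; omega
  have hdrift := drift_shift_mul hp hK
  by_cases hpos : 0 ≤ p
  · rw [if_pos hpos] at hdrift
    exact ⟨c - 1, B, htrans', by omega, fun q hq hqB =>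
      (hintact q hq hqB).shift_mul hp (Or.inl hpos)⟩
  · rw [if_neg hpos] at hdrift
    have hcard := Finset.card_insert_le (max c (1 - c)) B
    refine ⟨c - 1, insert (max c (1 - c)) B, htrans', by omega, fun q hq hqB => ?_⟩
    rw [Finset.mem_insert, not_or] at hqB
    exact (hintact q hq hqB.2).shift_mul hp (Or.inr hqB.1)

lemma MovesPaid.shift_inv_mul {K : ℕ} {v : Perm ℤ} {n p : ℤ} (hv : MovesPaid K v n)
    (hp : v p = 0) (hK : p ∈ Set.Ico (-K : ℤ) K) : MovesPaid K (shift⁻¹ * v) (n + 1) := by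
  have hflip : MovesPaid K (shift * Houghton.flip v) (n + 1) :=
    hv.flip.shift_mul (p := -1 - p) (by simp [flip_apply, hp])
      (by rw [Set.mem_Ico] at hK ⊢; omega)
  simpa [flip_shift, flip_flip] using hflip.flip

lemma inversionCount_shift_mul (E : Finset (ℤ × ℤ)) (v : Perm ℤ) :
    inversionCount E (shift * v) = inversionCount E v := by
  simp [inversionCount, shift_apply]

lemma inversionCount_shift_inv_mul (E : Finset (ℤ × ℤ)) (v : Perm ℤ) :
    inversionCount E (shift⁻¹ * v) = inversionCount E v := by
  simp only [inversionCount, Perm.mul_apply, shift_inv_apply, sub_lt_sub_iff_right]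

lemma inversionCount_adjSwap_mul_le (E : Finset (ℤ × ℤ)) (v : Perm ℤ) :
    inversionCount E (adjSwap * v) ≤ inversionCount E v + 1 := by
  refine (Finset.card_le_card fun p hp => ?_).trans
    (Finset.card_insert_le (v⁻¹ (-1), v⁻¹ 0) (E.filter fun p => v p.2 < v p.1))
  rw [Finset.mem_filter, Perm.mul_apply, Perm.mul_apply, adjSwap_apply, adjSwap_apply] at hp
  rw [Finset.mem_insert, Finset.mem_filter, Prod.ext_iff, Perm.eq_inv_iff_eq, Perm.eq_inv_iff_eq]
  by_cases hlt : v p.2 < v p.1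
  · exact Or.inr ⟨hp.1, hlt⟩
  · refine Or.inl ?_
    have := hp.2
    split_ifs at this <;> omega

lemma movesPaid_of_hasWord {E : Finset (ℤ × ℤ)} (hE : ∀ p ∈ E, p.1 ≤ p.2) {K n : ℕ} {v : Perm ℤ}
    (hv : HasWord gens v n) (hK : n ≤ K) : MovesPaid K v (n - inversionCount E v) := by
  refine HasWord.induction
    (P := fun v n => n ≤ K → MovesPaid K v (n - inversionCount E v)) ?_ ?_ hv hK
  · have hone : inversionCount E 1 = 0 := by
      rw [inversionCount, Finset.card_eq_zero, Finset.filter_eq_empty_iff]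
      exact fun p hp => not_lt_of_ge (hE p hp)
    simpa [hone] using MovesPaid.one K
  rw [forall_mem_gens]
  refine ⟨?_, ?_, ?_⟩ <;> intro v n hv ih hK <;> have hpaid := ih (by omega)
  · obtain ⟨p, hp⟩ := v.surjective (-1)
    have hdisp := natAbs_apply_sub_le hv p
    refine (hpaid.shift_mul hp (Set.mem_Ico.2 (by omega))).mono ?_
    rw [inversionCount_shift_mul]
    omega
  · obtain ⟨p, hp⟩ := v.surjective 0
    have hdisp := natAbs_apply_sub_le hv p
    refine (hpaid.shift_inv_mul hp (Set.mem_Ico.2 (by omega))).mono ?_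
    rw [inversionCount_shift_inv_mul]
    omega
  · refine hpaid.adjSwap_mul.mono ?_
    have := inversionCount_adjSwap_mul_le E v
    omega

/-- The pairs `x < y` in the layers up to `i` that contain `-1 - i` or `i`. -/
noncomputable def shell (i : ℕ) : Finset (ℤ × ℤ) :=
  {(-1 - i : ℤ)} ×ˢ Finset.Ioc (-1 - i : ℤ) i ∪ Finset.Ioo (-1 - i : ℤ) i ×ˢ {(i : ℤ)}

lemma mem_shell {i : ℕ} {p : ℤ × ℤ} :
    p ∈ shell i ↔ p.1 < p.2 ∧ -1 - i ≤ p.1 ∧ p.2 ≤ i ∧ (p.1 = -1 - i ∨ p.2 = i) := by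
  simp only [shell, Finset.mem_union, Finset.mem_product, Finset.mem_singleton, Finset.mem_Ioc,
    Finset.mem_Ioo]
  omega

lemma card_shell (i : ℕ) : (shell i).card = 4 * i + 1 := by
  rw [shell, Finset.card_union_of_disjoint, Finset.card_product, Finset.card_product,
    Finset.card_singleton, Finset.card_singleton, Int.card_Ioc, Int.card_Ioo]
  · omega
  · rw [Finset.disjoint_left]
    intro p
    simp only [Finset.mem_product, Finset.mem_singleton, Finset.mem_Ioc, Finset.mem_Ioo]
    omega

/-- The pairs that `mirror a b` inverts. -/
noncomputable def mirrorInversions (a b : ℕ) : Finset (ℤ × ℤ) :=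
  (Finset.Ico a b).biUnion shell

lemma mem_mirrorInversions {a b : ℕ} {p : ℤ × ℤ} :
    p ∈ mirrorInversions a b ↔ ∃ i, (a ≤ i ∧ i < b) ∧ p ∈ shell i := by
  simp only [mirrorInversions, Finset.mem_biUnion, Finset.mem_Ico]

lemma inversionCount_mirror (a b : ℕ) :
    inversionCount (mirrorInversions a b) (mirror a b) = ∑ i ∈ Finset.Ico a b, (4 * i + 1) := by
  have hinv : ∀ p ∈ mirrorInversions a b, mirror a b p.2 < mirror a b p.1 := by
    intro p hp
    obtain ⟨i, hi, hp⟩ := mem_mirrorInversions.1 hp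
    rw [mem_shell] at hp
    rw [mirror_apply, mirror_apply]
    split_ifs <;> omega
  rw [inversionCount, Finset.filter_true_of_mem hinv, mirrorInversions, Finset.card_biUnion]
  · exact Finset.sum_congr rfl fun i _ => card_shell i
  · intro i _ j _ hij
    rw [Function.onFun, Finset.disjoint_left]
    intro p hpi hpj
    rw [mem_shell] at hpi hpj
    omega

lemma drift_mirror (a : ℕ) {b K : ℕ} (hK : b ≤ K) :
    drift K (mirror a b) = ∑ i ∈ Finset.Ico a b, 4 * (i : ℤ) := by
  have hterm (i : ℕ) : offset (mirror a b (-1 - i)) - offset (mirror a b i) + 2 * i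
      = if a ≤ i ∧ i < b then 4 * (i : ℤ) else 0 := by
    rw [mirror_apply, mirror_apply]
    unfold offset
    split_ifs <;> omega
  have hlayers : (Finset.range K).filter (fun i => a ≤ i ∧ i < b) = Finset.Ico a b := by
    ext i
    rw [Finset.mem_filter, Finset.mem_range, Finset.mem_Ico]
    omega
  simp only [drift, hterm]
  rw [← Finset.sum_filter, hlayers]

lemma eventually_mirror_apply (a b : ℕ) : ∀ᶠ x in cofinite, mirror a b x = x := by
  filter_upwards [(Set.finite_Ico (-b : ℤ) b).compl_mem_cofinite] with x hx
  rw [Set.mem_compl_iff, Set.mem_Ico] at hx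
  exact if_neg (by omega)

lemma not_levelIntact_mirror {a b : ℕ} {q : ℤ} (hab : a ≤ b) (hqb : q ≤ b) :
    ¬ LevelIntact (mirror a (b + 1)) 0 q := by
  rintro (⟨-, -, hout⟩ | ⟨x, hx, hxq⟩ | ⟨x, hx, hxq⟩)
  · have := hout b (by rw [Set.mem_Ico]; omega)
    rw [mirror_apply, if_pos (by omega)] at this
    omega
  all_goals
    rw [Set.mem_Ico] at hx
    rw [mirror_apply] at hxq
    unfold offset at hxq
    split_ifs at hxq <;> omega

lemma le_of_hasWord_mirror {a b n : ℕ} (hab : a ≤ b) (hw : HasWord gens (mirror a (b + 1)) n) :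
    ∑ i ∈ Finset.Ico a (b + 1), (8 * i + 1) + 2 * b ≤ n := by
  have hE : ∀ p ∈ mirrorInversions a (b + 1), p.1 ≤ p.2 := fun p hp => by
    obtain ⟨i, -, hp⟩ := mem_mirrorInversions.1 hp
    exact (mem_shell.1 hp).1.le
  obtain ⟨c, B, htrans, hcost, hintact⟩ :=
    movesPaid_of_hasWord hE (K := n + b + 1) hw (by omega)
  obtain rfl : c = 0 := by
    obtain ⟨x, hxc, hx⟩ := (htrans.and (eventually_mirror_apply a (b + 1))).exists
    omega
  have hB : Finset.Icc (1 : ℤ) b ⊆ B := fun q hq => by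
    rw [Finset.mem_Icc] at hq
    by_contra hqB
    exact not_levelIntact_mirror hab hq.2 (hintact q hq.1 hqB)
  have hcard := Finset.card_le_card hB
  rw [Int.card_Icc] at hcard
  have hsum : ((∑ i ∈ Finset.Ico a (b + 1), (8 * i + 1) : ℕ) : ℤ)
      = ∑ i ∈ Finset.Ico a (b + 1), 4 * (i : ℤ)
        + (∑ i ∈ Finset.Ico a (b + 1), (4 * i + 1) : ℕ) := by
    push_cast
    rw [← Finset.sum_add_distrib]
    exact Finset.sum_congr rfl fun i _ => by ring
  rw [inversionCount_mirror, drift_mirror a (by omega)] at hcost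
  omega

lemma le_wlen_mirror {a b : ℕ} (hab : a ≤ b) :
    ∑ i ∈ Finset.Ico a (b + 1), (8 * i + 1) + 2 * b ≤ wlen gens (mirror a (b + 1)) := by
  have hword := hasWord_shift_zpow_conj_mirror (t := 0) hab (by simp)
  exact le_of_hasWord_mirror hab (HasWord.hasWord_wlen (by simpa using hword))

end Houghton

open Houghton in
/-- For `1 < m ≤ k` and `1 ≤ r < m`, the element `h_{k,m}` of
Houghton's group `H₂` has positive spherical comparison curvature at radius `r`. -/
theorem houghton_pos_sphereCurv (k m r : ℕ) (h1 : 1 < m) (h2 : m ≤ k)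
    (hr : 1 ≤ r) (hrm : r < m) :
    0 < MedScale.sphereCurv S r (h k m) := by
  obtain ⟨a, rfl⟩ : ∃ a, m = a + 1 := ⟨m - 1, by omega⟩
  obtain ⟨b, rfl⟩ : ∃ b, k = b + 1 := ⟨k - 1, by omega⟩
  have hab : a ≤ b := by omega
  have hr₀ : r ≠ 0 := by omega
  have hlen := le_wlen_mirror hab
  rw [S_eq_image, h_eq_extend, MedScale.sphereCurv_image extend_injective hr₀]
  refine MedScale.sphereCurv_pos gens_finite hr₀ (fun w hw => ?_)
    ⟨shift ^ r, wlen_shift_pow r, ?_⟩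
  · obtain ⟨t, ht, hconj⟩ :=
      exists_conj_mirror_eq (a := a) (b + 1) (MedScale.hasWord_of_mem_sphere hr₀ hw) (by omega)
    have hle := (hasWord_shift_zpow_conj_mirror (t := t) hab (by omega)).wlen_le
    rw [hconj]
    omega
  · have hle := (hasWord_shift_zpow_conj_mirror (t := r) hab (by omega)).wlen_le
    rw [zpow_neg, zpow_natCast, Int.natAbs_natCast] at hle
    omega
end

section
/- Let F_n be the free group on n ≥ 1 generators with symmetric generating set S = {a₁^{±1}, …, a_n^{±1}} and word metric d. Then for all x ≠ y in F_n and every bijection ζ : S → S, (1/(2n))·Σ_{s∈S} d(x s, y ζ(s)) ≥ d(x, y) + 2 − 2/n, with equality when ζ is the identity. Consequently the transport plan given by GenCon is optimal among permutation plans between the unit spheres about x and y. -/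
/-- The standard symmetric generating set `S = {a₁^{±1}, …, a_n^{±1}}` of the free
group `F_n`. -/
def freeGen (n : ℕ) : Set (FreeGroup (Fin n)) :=
  {g | ∃ i : Fin n, g = FreeGroup.of i ∨ g = (FreeGroup.of i)⁻¹}

/-! In the Cayley tree of a free group, `d(x s, y t) = |s⁻¹ g t|` with `g = x⁻¹ y ≠ 1`. Multiplying
`g` by `s⁻¹` on the left lengthens it by one, unless `s` is its first letter, in which case it
becomes shorter by one; the same holds for `t` on the right, with the first letter of `g⁻¹` in
place of that of `g`. So the cost of `(s, t)` is `|g| + 2`, minus `2` for each of the two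
exceptional letters, and a bijection of `S` meets each of them exactly once. This count is wrong
only when `g = s` and `t = s⁻¹`, where it is too low; the identity avoids that case because
`s⁻¹ ≠ s`. -/

section Letters

variable {α : Type*}

/-- The symmetric generating set `S = {a, a⁻¹ | a ∈ α}` of the free group on `α`, encoded as the
set of one-letter words: `(a, true)` stands for `a` and `(a, false)` for `a⁻¹`. -/
def signedGen (α : Type*) : Set (FreeGroup α) :=
  Set.range fun a : α × Bool => FreeGroup.mk [a]

theorem freeGen_eq_signedGen (n : ℕ) : freeGen n = signedGen (Fin n) := by
  ext g
  simp [freeGen, signedGen, FreeGroup.of, FreeGroup.invRev, or_comm, eq_comm]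

theorem mk_singleton_injective : Function.Injective fun a : α × Bool => FreeGroup.mk [a] := by
  classical
  intro a b hab
  simpa using congrArg FreeGroup.toWord hab

theorem signedGen_finite [Finite α] : (signedGen α).Finite :=
  Set.finite_range _

theorem ncard_signedGen : (signedGen α).ncard = 2 * Nat.card α := by
  rw [signedGen, ← Set.image_univ, Set.ncard_image_of_injective _ mk_singleton_injective,
    Set.ncard_univ, Nat.card_prod, Nat.card_eq_fintype_card (α := Bool), Fintype.card_bool,
    mul_comm]

theorem inv_ne_self_of_mem_signedGen {s : FreeGroup α} (hs : s ∈ signedGen α) : s⁻¹ ≠ s := by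
  obtain ⟨a, rfl⟩ := hs
  intro h
  simpa [Prod.ext_iff] using mk_singleton_injective h

theorem inv_mem_signedGen {s : FreeGroup α} (hs : s ∈ signedGen α) : s⁻¹ ∈ signedGen α := by
  obtain ⟨a, rfl⟩ := hs
  exact ⟨(a.1, !a.2), rfl⟩

variable [DecidableEq α]

/-- The first letter of the reduced word of `g`, as an element of the group; it is `1` when
`g = 1`. The last letter of `g` is the inverse of `firstLetter g⁻¹`. -/
def firstLetter (g : FreeGroup α) : FreeGroup α :=
  FreeGroup.mk (g.toWord.take 1)

theorem firstLetter_of_toWord_eq_cons {g : FreeGroup α} {a : α × Bool} {w : List (α × Bool)}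
    (h : g.toWord = a :: w) : firstLetter g = FreeGroup.mk [a] := by
  simp [firstLetter, h]

theorem firstLetter_mem_signedGen {g : FreeGroup α} (hg : g ≠ 1) :
    firstLetter g ∈ signedGen α := by
  obtain ⟨a, w, h⟩ := List.exists_cons_of_ne_nil (FreeGroup.toWord_eq_nil_iff.not.mpr hg)
  exact ⟨a, (firstLetter_of_toWord_eq_cons h).symm⟩

theorem firstLetter_eq_self {s : FreeGroup α} (hs : s ∈ signedGen α) : firstLetter s = s := by
  obtain ⟨a, rfl⟩ := hs
  exact firstLetter_of_toWord_eq_cons (FreeGroup.toWord_mk.trans (FreeGroup.reduce_singleton a))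

theorem firstLetter_eq_of_prefix {g h : FreeGroup α} (hg : g ≠ 1) (hgh : g.toWord <+: h.toWord) :
    firstLetter g = firstLetter h := by
  obtain ⟨a, w, hw⟩ := List.exists_cons_of_ne_nil (FreeGroup.toWord_eq_nil_iff.not.mpr hg)
  obtain ⟨v, hv⟩ := hgh
  rw [hw, List.cons_append] at hv
  rw [firstLetter_of_toWord_eq_cons hw, firstLetter_of_toWord_eq_cons hv.symm]

theorem norm_eq_one_of_mem_signedGen {s : FreeGroup α} (hs : s ∈ signedGen α) : s.norm = 1 := by
  obtain ⟨a, rfl⟩ := hs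
  simp [FreeGroup.norm]

end Letters

section Multiplication

variable {α : Type*} [DecidableEq α] {g s t : FreeGroup α}

theorem toWord_eq_firstLetter_append (g : FreeGroup α) :
    g.toWord = (firstLetter g).toWord ++ ((firstLetter g)⁻¹ * g).toWord := by
  have hsplit : (firstLetter g)⁻¹ * g = FreeGroup.mk (g.toWord.drop 1) := by
    rw [inv_mul_eq_iff_eq_mul, firstLetter, FreeGroup.mul_mk, List.take_append_drop,
      FreeGroup.mk_toWord]
  have hred : FreeGroup.IsReduced g.toWord := FreeGroup.isReduced_toWord
  rw [hsplit, firstLetter, FreeGroup.toWord_mk, FreeGroup.toWord_mk,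
    (hred.infix (List.take_prefix 1 _).isInfix).reduce_eq,
    (hred.infix (List.drop_suffix 1 _).isInfix).reduce_eq, List.take_append_drop]

theorem toWord_inv_mul_of_firstLetter_ne (hs : s ∈ signedGen α) (hsg : firstLetter g ≠ s) :
    (s⁻¹ * g).toWord = s⁻¹.toWord ++ g.toWord := by
  obtain ⟨a, rfl⟩ := hs
  have hred : FreeGroup.IsReduced ((a.1, !a.2) :: g.toWord) := by
    rcases hw : g.toWord with - | ⟨b, w⟩
    · exact .singleton
    · refine FreeGroup.isReduced_cons_cons.mpr ⟨fun hab => ?_, hw ▸ FreeGroup.isReduced_toWord⟩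
      by_contra hne
      have hba : b = a := Prod.ext hab.symm (by simpa using Ne.symm hne)
      exact hsg (hba ▸ firstLetter_of_toWord_eq_cons hw)
  rw [FreeGroup.toWord_mul]
  exact hred.reduce_eq

theorem toWord_mul_of_firstLetter_inv_ne (ht : t ∈ signedGen α) (hgt : firstLetter g⁻¹ ≠ t) :
    (g * t).toWord = g.toWord ++ t.toWord := by
  have h := congrArg FreeGroup.invRev (toWord_inv_mul_of_firstLetter_ne ht hgt)
  simpa only [FreeGroup.invRev_append, ← FreeGroup.toWord_inv, mul_inv_rev, inv_inv] using h

theorem toWord_eq_append_of_firstLetter_inv_eq (hgt : firstLetter g⁻¹ = t) :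
    g.toWord = (g * t).toWord ++ t⁻¹.toWord := by
  have h := congrArg FreeGroup.invRev (toWord_eq_firstLetter_append g⁻¹)
  simpa only [hgt, FreeGroup.invRev_append, ← FreeGroup.toWord_inv, mul_inv_rev, inv_inv] using h

theorem norm_inv_mul_add_ite (hs : s ∈ signedGen α) (g : FreeGroup α) :
    (s⁻¹ * g).norm + (if s = firstLetter g then 2 else 0) = g.norm + 1 := by
  have hs_norm : s.norm = 1 := norm_eq_one_of_mem_signedGen hs
  split_ifs with hsg
  · have hshorter : g.norm = s.norm + (s⁻¹ * g).norm := by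
      rw [hsg]
      exact (congrArg List.length (toWord_eq_firstLetter_append g)).trans List.length_append
    lia
  · have hlonger : (s⁻¹ * g).norm = s⁻¹.norm + g.norm :=
      (congrArg List.length (toWord_inv_mul_of_firstLetter_ne hs (Ne.symm hsg))).trans
        List.length_append
    rw [FreeGroup.norm_inv_eq] at hlonger
    lia

theorem norm_mul_add_ite (ht : t ∈ signedGen α) (g : FreeGroup α) :
    (g * t).norm + (if t = firstLetter g⁻¹ then 2 else 0) = g.norm + 1 := by
  have h := norm_inv_mul_add_ite ht g⁻¹
  rwa [← mul_inv_rev, FreeGroup.norm_inv_eq, FreeGroup.norm_inv_eq] at h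

theorem firstLetter_mul (ht : t ∈ signedGen α) (hg : g ≠ 1) (hgt : g * t ≠ 1) :
    firstLetter (g * t) = firstLetter g := by
  by_cases h : firstLetter g⁻¹ = t
  · exact firstLetter_eq_of_prefix hgt ⟨_, (toWord_eq_append_of_firstLetter_inv_eq h).symm⟩
  · exact (firstLetter_eq_of_prefix hg ⟨_, (toWord_mul_of_firstLetter_inv_ne ht h).symm⟩).symm

theorem norm_inv_mul_mul_add_ite (hs : s ∈ signedGen α) (ht : t ∈ signedGen α) (hg : g ≠ 1)
    (hgs : g ≠ s) :
    (s⁻¹ * g * t).norm + (if s = firstLetter g then 2 else 0) +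
      (if t = firstLetter g⁻¹ then 2 else 0) = g.norm + 2 := by
  have hlast : firstLetter (s⁻¹ * g)⁻¹ = firstLetter g⁻¹ := by
    rw [mul_inv_rev, inv_inv]
    exact firstLetter_mul hs (inv_ne_one.mpr hg) fun h => hgs (inv_mul_eq_one.mp h)
  have hleft := norm_inv_mul_add_ite hs g
  have hright := norm_mul_add_ite ht (s⁻¹ * g)
  rw [hlast] at hright
  lia

theorem norm_add_two_le_norm_inv_mul_mul_add_ite (hs : s ∈ signedGen α)
    (ht : t ∈ signedGen α) (hg : g ≠ 1) :
    g.norm + 2 ≤ (s⁻¹ * g * t).norm + (if s = firstLetter g then 2 else 0) +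
      (if t = firstLetter g⁻¹ then 2 else 0) := by
  by_cases hgs : g = s
  · subst hgs
    rw [inv_mul_cancel, one_mul, firstLetter_eq_self hs, if_pos rfl,
      norm_eq_one_of_mem_signedGen hs, norm_eq_one_of_mem_signedGen ht]
    lia
  · exact (norm_inv_mul_mul_add_ite hs ht hg hgs).ge

theorem norm_inv_mul_mul_self_add_ite (hs : s ∈ signedGen α) (hg : g ≠ 1) :
    (s⁻¹ * g * s).norm + (if s = firstLetter g then 2 else 0) +
      (if s = firstLetter g⁻¹ then 2 else 0) = g.norm + 2 := by
  by_cases hgs : g = s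
  · subst hgs
    rw [inv_mul_cancel, one_mul, firstLetter_eq_self hs, if_pos rfl,
      firstLetter_eq_self (inv_mem_signedGen hs), if_neg (inv_ne_self_of_mem_signedGen hs).symm]
  · exact norm_inv_mul_mul_add_ite hs hs hg hgs

end Multiplication

section FiniteSums

variable {β : Type*} {S : Set β}

theorem finsum_mem_ite_eq_of_bijOn {γ M : Type*} [DecidableEq γ] [AddCommMonoid M] {T : Set γ}
    {ζ : β → γ} (hζ : Set.BijOn ζ S T) {q : γ} (hq : q ∈ T) (c : M) :
    ∑ᶠ s ∈ S, (if ζ s = q then c else 0) = c := by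
  calc ∑ᶠ s ∈ S, (if ζ s = q then c else 0) = ∑ᶠ t ∈ T, if t = q then c else 0 :=
        finsum_mem_eq_of_bijOn ζ hζ fun _ _ => rfl
    _ = ∑ᶠ _ : q ∈ T, if q = q then c else 0 :=
        finsum_eq_single _ q fun t htq => by simp only [if_neg htq, finsum_zero]
    _ = c := by simp only [hq, finsum_true, if_true]

theorem ncard_mul_le_finsum_mem (hS : S.Finite) {f : β → ℕ} {c : ℕ} (hf : ∀ s ∈ S, c ≤ f s) :
    S.ncard * c ≤ ∑ᶠ s ∈ S, f s := by
  rw [finsum_mem_eq_finite_toFinset_sum f hS, Set.ncard_eq_toFinset_card S hS, ← smul_eq_mul]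
  exact Finset.card_nsmul_le_sum _ _ _ fun s hs => hf s (hS.mem_toFinset.mp hs)

theorem finsum_mem_eq_ncard_mul (hS : S.Finite) {f : β → ℕ} {c : ℕ} (hf : ∀ s ∈ S, f s = c) :
    ∑ᶠ s ∈ S, f s = S.ncard * c := by
  rw [finsum_mem_eq_finite_toFinset_sum f hS, Set.ncard_eq_toFinset_card S hS]
  exact Finset.sum_const_nat fun s hs => hf s (hS.mem_toFinset.mp hs)

end FiniteSums

section Transport

variable {α : Type*} [Finite α] [DecidableEq α] {g : FreeGroup α}

theorem finsum_norm_add_ite_add_ite {ζ : FreeGroup α → FreeGroup α}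
    (hζ : Set.BijOn ζ (signedGen α) (signedGen α)) (hg : g ≠ 1) :
    ∑ᶠ s ∈ signedGen α, ((s⁻¹ * g * ζ s).norm + (if s = firstLetter g then 2 else 0) +
      (if ζ s = firstLetter g⁻¹ then 2 else 0)) =
    (∑ᶠ s ∈ signedGen α, (s⁻¹ * g * ζ s).norm) + 4 := by
  have hsource : ∑ᶠ s ∈ signedGen α, (if s = firstLetter g then 2 else 0) = 2 :=
    finsum_mem_ite_eq_of_bijOn (Set.bijOn_id _) (firstLetter_mem_signedGen hg) 2
  have htarget : ∑ᶠ s ∈ signedGen α, (if ζ s = firstLetter g⁻¹ then 2 else 0) = 2 :=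
    finsum_mem_ite_eq_of_bijOn hζ (firstLetter_mem_signedGen (inv_ne_one.mpr hg)) 2
  rw [finsum_mem_add_distrib signedGen_finite, finsum_mem_add_distrib signedGen_finite, hsource,
    htarget]

theorem two_mul_card_mul_le_finsum_norm_add_four {ζ : FreeGroup α → FreeGroup α}
    (hζ : Set.BijOn ζ (signedGen α) (signedGen α)) (hg : g ≠ 1) :
    2 * Nat.card α * (g.norm + 2) ≤ (∑ᶠ s ∈ signedGen α, (s⁻¹ * g * ζ s).norm) + 4 := by
  rw [← finsum_norm_add_ite_add_ite hζ hg, ← ncard_signedGen]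
  exact ncard_mul_le_finsum_mem signedGen_finite fun s hs =>
    norm_add_two_le_norm_inv_mul_mul_add_ite hs (hζ.mapsTo hs) hg

theorem finsum_norm_inv_mul_mul_self_add_four (hg : g ≠ 1) :
    (∑ᶠ s ∈ signedGen α, (s⁻¹ * g * s).norm) + 4 = 2 * Nat.card α * (g.norm + 2) := by
  rw [← ncard_signedGen, ← finsum_mem_eq_ncard_mul signedGen_finite fun s hs =>
    norm_inv_mul_mul_self_add_ite hs hg]
  exact (finsum_norm_add_ite_add_ite (Set.bijOn_id _) hg).symm

theorem freeGroup_transport_optimal_general {x y : FreeGroup α} (hxy : x ≠ y) :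
    (∀ ζ : FreeGroup α → FreeGroup α, Set.BijOn ζ (signedGen α) (signedGen α) →
      ((x⁻¹ * y).norm : ℝ) + 2 - 2 / (Nat.card α : ℝ) ≤
        (1 / (2 * Nat.card α : ℝ)) *
          ∑ᶠ s ∈ signedGen α, (((x * s)⁻¹ * (y * ζ s)).norm : ℝ)) ∧
    (1 / (2 * Nat.card α : ℝ)) * ∑ᶠ s ∈ signedGen α, (((x * s)⁻¹ * (y * s)).norm : ℝ) =
      ((x⁻¹ * y).norm : ℝ) + 2 - 2 / (Nat.card α : ℝ) := by
  have hg : x⁻¹ * y ≠ 1 := inv_mul_eq_one.not.mpr hxy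
  have hassoc (s t : FreeGroup α) : (x * s)⁻¹ * (y * t) = s⁻¹ * (x⁻¹ * y) * t := by group
  have : Nonempty α := by
    by_contra! hempty
    exact hxy (Subsingleton.elim x y)
  have hcard : (Nat.card α : ℝ) ≠ 0 := Nat.cast_ne_zero.mpr Nat.card_pos.ne'
  have hmean : ((x⁻¹ * y).norm : ℝ) + 2 - 2 / Nat.card α =
      1 / (2 * Nat.card α) * (2 * Nat.card α * ((x⁻¹ * y).norm + 2) - 4) := by
    field_simp
    ring
  simp only [hassoc, hmean, ← Nat.cast_finsum_mem signedGen_finite]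
  refine ⟨fun ζ hζ => ?_, ?_⟩
  · gcongr
    rw [sub_le_iff_le_add]
    exact_mod_cast two_mul_card_mul_le_finsum_norm_add_four hζ hg
  · congr 1
    rw [eq_sub_iff_add_eq]
    exact_mod_cast finsum_norm_inv_mul_mul_self_add_four hg

end Transport

/-- In the free group `F_n` (`n ≥ 1`) with generating set
`S = {a₁^{±1}, …, a_n^{±1}}` and word metric `d(x,y) = |x⁻¹y|` (reduced word length),
for all `x ≠ y` and every bijection `ζ : S → S` the permutation transport plan has cost
`(1/(2n)) ∑_{s ∈ S} d(xs, yζ(s)) ≥ d(x,y) + 2 − 2/n`, with equality when `ζ` is the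
identity: the plan given by `GenCon` is optimal among permutation plans between the
unit spheres about `x` and `y`. -/
theorem freeGroup_transport_optimal (n : ℕ) (hn : 1 ≤ n) (x y : FreeGroup (Fin n))
    (hxy : x ≠ y) :
    (∀ ζ : FreeGroup (Fin n) → FreeGroup (Fin n), Set.BijOn ζ (freeGen n) (freeGen n) →
      ((x⁻¹ * y).norm : ℝ) + 2 - 2 / (n : ℝ) ≤
        (1 / (2 * n : ℝ)) * ∑ᶠ s ∈ freeGen n, (((x * s)⁻¹ * (y * ζ s)).norm : ℝ)) ∧
    (1 / (2 * n : ℝ)) * ∑ᶠ s ∈ freeGen n, (((x * s)⁻¹ * (y * s)).norm : ℝ) =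
      ((x⁻¹ * y).norm : ℝ) + 2 - 2 / (n : ℝ) := by
  simpa only [freeGen_eq_signedGen, Nat.card_fin] using freeGroup_transport_optimal_general hxy
end
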